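/- arXiv:1906.00729 — 3 statements merged into one kernel-verified Lean document; each statement's English description precedes it below -/
import Mathlib

section
/- Let L, L′ ∈ ℝ^{m₂×d}, and let P, P′ be symmetric positive definite matrices satisfying the inner Riccati equation for L and L′ respectively, with ρ(Ã_L − B·K_P(L)) < 1 and ρ(Ã_{L′} − B·K_{P′}(L′)) < 1. Define K̃ := K_P(L) − (Rᵘ + BᵀPB)⁻¹BᵀPC(L′−L) and suppose ρ(A − BK̃ − CL′) < 1. Then for every x ∈ ℝ^d, with trajectory x̃₀ = x, x̃_{t+1} = (A − BK̃ − CL′)x̃_t and Γ̃ := Σ_{t≥0} x̃_t x̃_tᵀ, one has xᵀP′x − xᵀPx ≤ 2·tr[Γ̃(L′−L)ᵀF_P(L)] − tr[Γ̃(L′−L)ᵀW_P(L)(L′−L)]. -/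
/-! The gain `K̃` equals `K_P(L')`, the minimizer of the one-step cost
`K ↦ Q̃_{L'} + KᵀRᵘK + (Ã_{L'} - BK)ᵀP(Ã_{L'} - BK)`. Put `M := Ã_{L'} - B K̃`.

* Completing the square (`complete_square`) for `P'` and the Riccati equation for `L'` show that
  `P' ≤ Q̃_{L'} + K̃ᵀRᵘK̃ + MᵀP'M` in the Loewner order, since `K_{P'}(L')` is the minimizer there.
* Completing the square for `P`, whose minimizer is `K̃` itself, and expanding the quadratic
  Riccati map at `L' = L + Δ` (`riccati_expand`) give
  `Q̃_{L'} + K̃ᵀRᵘK̃ + MᵀPM = P + ΔᵀF_P(L) + F_P(L)ᵀΔ - ΔᵀW_P(L)Δ`.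

Subtracting, `D := P' - P` satisfies `D ≤ N + MᵀDM` with `N := ΔᵀF + FᵀΔ - ΔᵀWΔ`. Iterating along
`x_{t+1} = M x_t` bounds `xᵀDx` by `∑_{t<n} x_tᵀ N x_t + x_nᵀ D x_n` (`telescope`). As `ρ(M) < 1`,
Gelfand's formula makes `M^t` decay geometrically, so the remainder vanishes, the Gramian converges,
and the sum tends to `tr(Γ̃ N)`. -/

open Matrix

noncomputable section

/-- Spectral radius of a real square matrix: the spectral radius of its complexification. -/
def specRad {n : ℕ} (M : Matrix (Fin n) (Fin n) ℝ) : ENNReal :=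
  spectralRadius ℂ (M.map (algebraMap ℝ ℂ))

/-- Spectral (operator 2-) norm of a real matrix. -/
def specNorm {m n : ℕ} (M : Matrix (Fin m) (Fin n) ℝ) : ℝ :=
  ‖LinearMap.toContinuousLinearMap (Matrix.toEuclideanLin M)‖

/-- Smallest (real) eigenvalue of a matrix, as the infimum of its real spectrum. -/
def lamMin {n : ℕ} (M : Matrix (Fin n) (Fin n) ℝ) : ℝ :=
  sInf (spectrum ℝ M)

/-- The data of a zero-sum LQ game. -/
structure LQ (d m₁ m₂ : ℕ) where
  A : Matrix (Fin d) (Fin d) ℝ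
  B : Matrix (Fin d) (Fin m₁) ℝ
  C : Matrix (Fin d) (Fin m₂) ℝ
  Q : Matrix (Fin d) (Fin d) ℝ
  Ru : Matrix (Fin m₁) (Fin m₁) ℝ
  Rv : Matrix (Fin m₂) (Fin m₂) ℝ
  hQ : Q.PosDef
  hRu : Ru.PosDef
  hRv : Rv.PosDef

namespace LQ

variable {d m₁ m₂ : ℕ} (S : LQ d m₁ m₂)

/-- Closed-loop matrix `A - B*K - C*L`. -/
def cl (K : Matrix (Fin m₁) (Fin d) ℝ) (L : Matrix (Fin m₂) (Fin d) ℝ) :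
    Matrix (Fin d) (Fin d) ℝ :=
  S.A - S.B * K - S.C * L

/-- A pair `(K, L)` is stabilizing if `ρ(A - BK - CL) < 1`. -/
def IsStabilizing (K : Matrix (Fin m₁) (Fin d) ℝ) (L : Matrix (Fin m₂) (Fin d) ℝ) : Prop :=
  specRad (S.cl K L) < 1

/-- `P_{K,L} = Σ_{t≥0} ((A-BK-CL)ᵀ)ᵗ (Q + KᵀRᵘK - LᵀRᵛL) (A-BK-CL)ᵗ`. -/
def P (K : Matrix (Fin m₁) (Fin d) ℝ) (L : Matrix (Fin m₂) (Fin d) ℝ) :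
    Matrix (Fin d) (Fin d) ℝ :=
  ∑' t : ℕ, ((S.cl K L)ᵀ) ^ t * (S.Q + Kᵀ * S.Ru * K - Lᵀ * S.Rv * L) * (S.cl K L) ^ t

/-- `Σ_{K,L} = Σ_{t≥0} (A-BK-CL)ᵗ Sig0 ((A-BK-CL)ᵀ)ᵗ`. -/
def Sig (Sig0 : Matrix (Fin d) (Fin d) ℝ) (K : Matrix (Fin m₁) (Fin d) ℝ)
    (L : Matrix (Fin m₂) (Fin d) ℝ) : Matrix (Fin d) (Fin d) ℝ :=
  ∑' t : ℕ, (S.cl K L) ^ t * Sig0 * ((S.cl K L)ᵀ) ^ t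

/-- The cost `C(K,L) = tr(Sig0 P_{K,L})`. -/
def cost (Sig0 : Matrix (Fin d) (Fin d) ℝ) (K : Matrix (Fin m₁) (Fin d) ℝ)
    (L : Matrix (Fin m₂) (Fin d) ℝ) : ℝ :=
  (Sig0 * S.P K L).trace

/-- `E_{K,L} = (Rᵘ + Bᵀ P_{K,L} B) K - Bᵀ P_{K,L} (A - CL)`. -/
def E (K : Matrix (Fin m₁) (Fin d) ℝ) (L : Matrix (Fin m₂) (Fin d) ℝ) :
    Matrix (Fin m₁) (Fin d) ℝ :=
  (S.Ru + (S.B)ᵀ * S.P K L * S.B) * K - (S.B)ᵀ * S.P K L * (S.A - S.C * L)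

/-- `F_{K,L} = (-Rᵛ + Cᵀ P_{K,L} C) L - Cᵀ P_{K,L} (A - BK)`. -/
def F (K : Matrix (Fin m₁) (Fin d) ℝ) (L : Matrix (Fin m₂) (Fin d) ℝ) :
    Matrix (Fin m₂) (Fin d) ℝ :=
  (-S.Rv + (S.C)ᵀ * S.P K L * S.C) * L - (S.C)ᵀ * S.P K L * (S.A - S.B * K)

/-- The value function `V_{K,L}(x) = xᵀ P_{K,L} x`. -/
def V (K : Matrix (Fin m₁) (Fin d) ℝ) (L : Matrix (Fin m₂) (Fin d) ℝ) (x : Fin d → ℝ) : ℝ :=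
  x ⬝ᵥ (S.P K L *ᵥ x)

/-- The advantage function `A_{K,L}(x,u,v)`. -/
def Adv (K : Matrix (Fin m₁) (Fin d) ℝ) (L : Matrix (Fin m₂) (Fin d) ℝ)
    (x : Fin d → ℝ) (u : Fin m₁ → ℝ) (v : Fin m₂ → ℝ) : ℝ :=
  x ⬝ᵥ (S.Q *ᵥ x) + u ⬝ᵥ (S.Ru *ᵥ u) - v ⬝ᵥ (S.Rv *ᵥ v)
    + (S.A *ᵥ x + S.B *ᵥ u + S.C *ᵥ v) ⬝ᵥ (S.P K L *ᵥ (S.A *ᵥ x + S.B *ᵥ u + S.C *ᵥ v))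
    - x ⬝ᵥ (S.P K L *ᵥ x)

/-- `Ã_L = A - CL`. -/
def At (L : Matrix (Fin m₂) (Fin d) ℝ) : Matrix (Fin d) (Fin d) ℝ := S.A - S.C * L

/-- `P` satisfies the inner Riccati equation for `L`. -/
def Riccati (L : Matrix (Fin m₂) (Fin d) ℝ) (P : Matrix (Fin d) (Fin d) ℝ) : Prop :=
  P = (S.Q - Lᵀ * S.Rv * L) + (S.At L)ᵀ * P * S.At L
      - (S.At L)ᵀ * P * S.B * (S.Ru + (S.B)ᵀ * P * S.B)⁻¹ * (S.B)ᵀ * P * S.At L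

/-- `K_P(L) = (Rᵘ + BᵀPB)⁻¹ BᵀP Ã_L`. -/
def KP (L : Matrix (Fin m₂) (Fin d) ℝ) (P : Matrix (Fin d) (Fin d) ℝ) :
    Matrix (Fin m₁) (Fin d) ℝ :=
  (S.Ru + (S.B)ᵀ * P * S.B)⁻¹ * (S.B)ᵀ * P * S.At L

/-- `F_P(L) = (-Rᵛ + CᵀPC) L - CᵀP (A - B K_P(L))`. -/
def FP (L : Matrix (Fin m₂) (Fin d) ℝ) (P : Matrix (Fin d) (Fin d) ℝ) :
    Matrix (Fin m₂) (Fin d) ℝ :=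
  (-S.Rv + (S.C)ᵀ * P * S.C) * L - (S.C)ᵀ * P * (S.A - S.B * S.KP L P)

/-- `W_P(L) = Rᵛ - Cᵀ[P - PB(Rᵘ + BᵀPB)⁻¹BᵀP]C`. -/
def WP (L : Matrix (Fin m₂) (Fin d) ℝ) (P : Matrix (Fin d) (Fin d) ℝ) :
    Matrix (Fin m₂) (Fin m₂) ℝ :=
  S.Rv - (S.C)ᵀ * (P - P * S.B * (S.Ru + (S.B)ᵀ * P * S.B)⁻¹ * (S.B)ᵀ * P) * S.C

end LQ

/-! ### Decay of powers and the Gramian -/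

section Decay

attribute [local instance] Matrix.linftyOpNormedRing Matrix.linftyOpNormedAlgebra

/-- Geometric decay of the powers of a Schur stable matrix, from Gelfand's formula for the
`ℓ^∞` operator norm of the complexification. -/
lemma specRad_summable_pow {n : ℕ} (M : Matrix (Fin n) (Fin n) ℝ) (h : specRad M < 1)
    (i j : Fin n) : Summable fun t : ℕ => (M ^ t) i j := by
  set a : Matrix (Fin n) (Fin n) ℂ := M.map (algebraMap ℝ ℂ) with ha
  have hg := spectrum.pow_nnnorm_pow_one_div_tendsto_nhds_spectralRadius a
  obtain ⟨r, hr1, hr2⟩ := ENNReal.lt_iff_exists_nnreal_btwn.1 (show spectralRadius ℂ a < 1 from h)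
  have hr3 : r < 1 := by exact_mod_cast hr2
  have hev : ∀ᶠ t : ℕ in Filter.atTop, ‖a ^ t‖₊ ≤ r ^ t := by
    filter_upwards [hg.eventually (gt_mem_nhds hr1), Filter.eventually_gt_atTop 0] with t ht ht0
    have h1 : ((‖a ^ t‖₊ : ENNReal) ^ (1 / t : ℝ)) ^ t ≤ (r : ENNReal) ^ t :=
      pow_le_pow_left₀ (zero_le) ht.le t
    rw [← ENNReal.rpow_natCast, ← ENNReal.rpow_mul, one_div,
      inv_mul_cancel₀ (by exact_mod_cast ht0.ne'), ENNReal.rpow_one] at h1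
    exact_mod_cast h1
  refine summable_of_isBigO_nat (summable_geometric_of_lt_one r.2 (by exact_mod_cast hr3)) ?_
  refine Asymptotics.IsBigO.of_bound 1 ?_
  filter_upwards [hev] with t ht
  have hpow : a ^ t = (M ^ t).map (algebraMap ℝ ℂ) := (Matrix.map_pow M (algebraMap ℝ ℂ) t).symm
  -- every entry is bounded by its row sum, hence by the `ℓ^∞` operator norm
  have hentry : ‖(a ^ t) i j‖₊ ≤ ‖a ^ t‖₊ := by
    rw [Matrix.linfty_opNNNorm_def]
    exact (Finset.single_le_sum (f := fun j => ‖(a ^ t) i j‖₊) (fun _ _ => zero_le)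
      (Finset.mem_univ j)).trans
      (Finset.le_sup (f := fun i => ∑ j, ‖(a ^ t) i j‖₊) (Finset.mem_univ i))
  have h2 : ‖(a ^ t) i j‖ ≤ (r : ℝ) ^ t := by exact_mod_cast hentry.trans ht
  rw [hpow] at h2
  have h3 : ‖(M ^ t) i j‖ ≤ (r : ℝ) ^ t := by simpa using h2
  rw [one_mul]
  exact h3.trans (le_abs_self _)

end Decay

lemma summable_traj {n : ℕ} (M : Matrix (Fin n) (Fin n) ℝ) (h : specRad M < 1)
    (x : Fin n → ℝ) (i : Fin n) : Summable fun t : ℕ => (M ^ t *ᵥ x) i := by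
  simp only [Matrix.mulVec, dotProduct]
  exact summable_sum fun j _ => (specRad_summable_pow M h i j).mul_right _

lemma summable_gramian {n : ℕ} (M : Matrix (Fin n) (Fin n) ℝ) (h : specRad M < 1)
    (x : Fin n → ℝ) : Summable fun t : ℕ => vecMulVec (M ^ t *ᵥ x) (M ^ t *ᵥ x) := by
  refine Pi.summable.2 fun i => Pi.summable.2 fun j => ?_
  refine summable_of_isBigO_nat (summable_traj M h x i).norm ?_
  have h0 := (summable_traj M h x j).tendsto_atTop_zero
  have := (Asymptotics.isBigO_refl (fun t : ℕ => (M ^ t *ᵥ x) i) Filter.atTop).mul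
    (h0.isBigO_one ℝ)
  simpa [vecMulVec_apply] using this.norm_right

/-! ### Lyapunov comparison along a trajectory -/

/-- Iterating the one-step inequality `D ≤ N + MᵀDM` along the trajectory of `M`. -/
lemma telescope {n : ℕ} (M D N : Matrix (Fin n) (Fin n) ℝ)
    (hstep : ∀ y : Fin n → ℝ, y ⬝ᵥ (D *ᵥ y) ≤ y ⬝ᵥ (N *ᵥ y) + (M *ᵥ y) ⬝ᵥ (D *ᵥ (M *ᵥ y)))
    (x : Fin n → ℝ) (k : ℕ) :
    x ⬝ᵥ (D *ᵥ x) ≤ ∑ t ∈ Finset.range k, (M ^ t *ᵥ x) ⬝ᵥ (N *ᵥ (M ^ t *ᵥ x))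
      + (M ^ k *ᵥ x) ⬝ᵥ (D *ᵥ (M ^ k *ᵥ x)) := by
  induction k with
  | zero => simp
  | succ k ih =>
    have := hstep (M ^ k *ᵥ x)
    rw [Finset.sum_range_succ, pow_succ' M k, ← Matrix.mulVec_mulVec]
    linarith

lemma trace_vecMulVec_mul {n : ℕ} (y : Fin n → ℝ) (N : Matrix (Fin n) (Fin n) ℝ) :
    (vecMulVec y y * N).trace = y ⬝ᵥ (N *ᵥ y) := by
  rw [Matrix.vecMulVec_mul, Matrix.trace_vecMulVec, Matrix.dotProduct_mulVec, dotProduct_comm]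

/-- The infinite-horizon form of `telescope`: under `ρ(M) < 1` the remainder vanishes and the
running sum becomes a trace against the Gramian of the trajectory. -/
lemma lyapunov_bound {n : ℕ} (M D N : Matrix (Fin n) (Fin n) ℝ) (h : specRad M < 1)
    (hstep : ∀ y : Fin n → ℝ, y ⬝ᵥ (D *ᵥ y) ≤ y ⬝ᵥ (N *ᵥ y) + (M *ᵥ y) ⬝ᵥ (D *ᵥ (M *ᵥ y)))
    (x : Fin n → ℝ) :
    x ⬝ᵥ (D *ᵥ x) ≤ ((∑' t : ℕ, vecMulVec (M ^ t *ᵥ x) (M ^ t *ᵥ x)) * N).trace := by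
  have h0 : Filter.Tendsto (fun t : ℕ => M ^ t *ᵥ x) Filter.atTop (nhds 0) :=
    tendsto_pi_nhds.2 fun i => (summable_traj M h x i).tendsto_atTop_zero
  have hc : Continuous fun y : Fin n → ℝ => y ⬝ᵥ (D *ᵥ y) := by fun_prop
  have h1 := (hc.tendsto 0).comp h0
  have hc2 : Continuous fun X : Matrix (Fin n) (Fin n) ℝ => (X * N).trace := by fun_prop
  have h2 := (hc2.tendsto _).comp (summable_gramian M h x).hasSum.tendsto_sum_nat
  have h3 := h2.add h1
  simp only [zero_dotProduct, add_zero] at h3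
  refine ge_of_tendsto' h3 fun k => ?_
  have := telescope M D N hstep x k
  simpa [Finset.sum_mul, Matrix.trace_sum, trace_vecMulVec_mul] using this

/-! ### Riccati algebra -/

/-- Completing the square in the gain `K`; `K₀` is the minimizer, characterized by its normal
equation. -/
lemma complete_square {d m : ℕ} (a P : Matrix (Fin d) (Fin d) ℝ) (B : Matrix (Fin d) (Fin m) ℝ)
    (R : Matrix (Fin m) (Fin m) ℝ) (K K₀ : Matrix (Fin m) (Fin d) ℝ)
    (hP : Pᵀ = P) (hR : Rᵀ = R) (hK : (R + Bᵀ * P * B) * K₀ = Bᵀ * P * a) :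
    Kᵀ * R * K + (a - B * K)ᵀ * P * (a - B * K)
      = aᵀ * P * a - aᵀ * P * B * K₀ + (K - K₀)ᵀ * (R + Bᵀ * P * B) * (K - K₀) := by
  have hK' : K₀ᵀ * (R + Bᵀ * P * B) = aᵀ * P * B := by
    have := congrArg transpose hK
    simpa [Matrix.transpose_mul, hP, hR, Matrix.mul_assoc] using this
  have e : (K - K₀)ᵀ * (R + Bᵀ * P * B) * (K - K₀)
      = Kᵀ * (R + Bᵀ * P * B) * K - aᵀ * P * B * K - Kᵀ * (Bᵀ * P * a) + aᵀ * P * B * K₀ := by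
    rw [transpose_sub, Matrix.sub_mul, Matrix.sub_mul, Matrix.mul_sub, Matrix.mul_sub, hK',
      Matrix.mul_assoc Kᵀ _ K₀, hK]
    abel
  rw [e]
  simp only [transpose_sub, transpose_mul, Matrix.mul_sub, Matrix.sub_mul, Matrix.mul_add,
    Matrix.add_mul, Matrix.mul_assoc]
  abel

namespace LQ

variable {d m₁ m₂ : ℕ} (S : LQ d m₁ m₂)

lemma posDef_G {P : Matrix (Fin d) (Fin d) ℝ} (hP : P.PosDef) :
    (S.Ru + (S.B)ᵀ * P * S.B).PosDef := by
  refine S.hRu.add_posSemidef ?_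
  simpa using hP.posSemidef.conjTranspose_mul_mul_same S.B

/-- The normal equation for the inner best response. -/
lemma G_mul_KP {P : Matrix (Fin d) (Fin d) ℝ} (hP : P.PosDef) (L : Matrix (Fin m₂) (Fin d) ℝ) :
    (S.Ru + (S.B)ᵀ * P * S.B) * S.KP L P = (S.B)ᵀ * P * S.At L := by
  have hu : IsUnit (S.Ru + (S.B)ᵀ * P * S.B).det :=
    (Matrix.isUnit_iff_isUnit_det _).1 (S.posDef_G hP).isUnit
  rw [KP, Matrix.mul_assoc _⁻¹, Matrix.mul_assoc _⁻¹, Matrix.mul_nonsing_inv_cancel_left _ _ hu]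

/-- The Riccati map for `L`; `P` satisfies the inner Riccati equation iff it is a fixed point. -/
def ricMap (L : Matrix (Fin m₂) (Fin d) ℝ) (P : Matrix (Fin d) (Fin d) ℝ) :
    Matrix (Fin d) (Fin d) ℝ :=
  (S.Q - Lᵀ * S.Rv * L) + (S.At L)ᵀ * P * S.At L
    - (S.At L)ᵀ * P * S.B * (S.Ru + (S.B)ᵀ * P * S.B)⁻¹ * (S.B)ᵀ * P * S.At L

/-- The one-step cost of a gain `K` is the Riccati value plus a square centred at `K_P(L)`. -/
lemma step_cost {P : Matrix (Fin d) (Fin d) ℝ} (hP : P.PosDef) (L : Matrix (Fin m₂) (Fin d) ℝ)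
    (K : Matrix (Fin m₁) (Fin d) ℝ) :
    (S.Q - Lᵀ * S.Rv * L) + Kᵀ * S.Ru * K + (S.At L - S.B * K)ᵀ * P * (S.At L - S.B * K)
      = S.ricMap L P
        + (K - S.KP L P)ᵀ * (S.Ru + (S.B)ᵀ * P * S.B) * (K - S.KP L P) := by
  have hPt : Pᵀ = P := by simpa using hP.isHermitian.eq
  have hRt : (S.Ru)ᵀ = S.Ru := by simpa using S.hRu.isHermitian.eq
  rw [add_assoc, complete_square (S.At L) P S.B S.Ru K (S.KP L P) hPt hRt (S.G_mul_KP hP L),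
    ricMap]
  have : (S.At L)ᵀ * P * S.B * S.KP L P
      = (S.At L)ᵀ * P * S.B * (S.Ru + (S.B)ᵀ * P * S.B)⁻¹ * (S.B)ᵀ * P * S.At L := by
    simp only [KP, Matrix.mul_assoc]
  rw [this]
  abel

/-- Exact second-order expansion of the Riccati map in the adversary's gain. -/
lemma riccati_expand {P : Matrix (Fin d) (Fin d) ℝ} (hP : P.PosDef)
    (L Δ : Matrix (Fin m₂) (Fin d) ℝ) :
    S.ricMap (L + Δ) P
      = S.ricMap L P + (Δᵀ * S.FP L P + (S.FP L P)ᵀ * Δ) - Δᵀ * S.WP L P * Δ := by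
  have hPt : Pᵀ = P := by simpa using hP.isHermitian.eq
  have hVt : (S.Rv)ᵀ = S.Rv := by simpa using S.hRv.isHermitian.eq
  have hGt : ((S.Ru + (S.B)ᵀ * P * S.B)⁻¹)ᵀ = (S.Ru + (S.B)ᵀ * P * S.B)⁻¹ := by
    rw [Matrix.transpose_nonsing_inv]
    congr 1
    simpa using (S.posDef_G hP).isHermitian.eq
  simp only [ricMap, FP, WP, KP, At]
  generalize (S.Ru + (S.B)ᵀ * P * S.B)⁻¹ = J at *
  simp only [transpose_sub, transpose_add, transpose_neg, transpose_mul, transpose_transpose,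
    hPt, hVt, hGt, Matrix.mul_sub,
    Matrix.sub_mul, Matrix.mul_add, Matrix.add_mul, Matrix.mul_neg, Matrix.neg_mul,
    Matrix.mul_assoc]
  abel

end LQ

open LQ in
/-- Value-difference upper bound between inner Riccati solutions: with
`K̃ = K_P(L) - (Rᵘ+BᵀPB)⁻¹BᵀPC(L'-L)` stabilizing with `L'`, and `Γ̃ = Σ_t x̃_t x̃_tᵀ` along
the trajectory of `(K̃, L')` started at `x`,
`xᵀP'x - xᵀPx ≤ 2 tr[Γ̃(L'-L)ᵀF_P(L)] - tr[Γ̃(L'-L)ᵀW_P(L)(L'-L)]`. -/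
theorem value_difference_upper_bound {d m₁ m₂ : ℕ} (S : LQ d m₁ m₂)
    (L L' : Matrix (Fin m₂) (Fin d) ℝ) (P P' : Matrix (Fin d) (Fin d) ℝ)
    (hP : P.PosDef) (hP' : P'.PosDef)
    (hric : S.Riccati L P) (hric' : S.Riccati L' P')
    (hstab : specRad (S.At L - S.B * S.KP L P) < 1)
    (hstab' : specRad (S.At L' - S.B * S.KP L' P') < 1)
    (Kt : Matrix (Fin m₁) (Fin d) ℝ)
    (hKt : Kt = S.KP L P - (S.Ru + (S.B)ᵀ * P * S.B)⁻¹ * (S.B)ᵀ * P * S.C * (L' - L))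
    (hKtstab : specRad (S.A - S.B * Kt - S.C * L') < 1)
    (x : Fin d → ℝ) :
    x ⬝ᵥ (P' *ᵥ x) - x ⬝ᵥ (P *ᵥ x) ≤
      2 * ((∑' t : ℕ, vecMulVec ((S.A - S.B * Kt - S.C * L') ^ t *ᵥ x)
              ((S.A - S.B * Kt - S.C * L') ^ t *ᵥ x)) * (L' - L)ᵀ * S.FP L P).trace
        - ((∑' t : ℕ, vecMulVec ((S.A - S.B * Kt - S.C * L') ^ t *ᵥ x)
              ((S.A - S.B * Kt - S.C * L') ^ t *ᵥ x)) * (L' - L)ᵀ * S.WP L P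
              * (L' - L)).trace := by
  -- `K̃` is the inner best response to `L'` for the cost-to-go `P`.
  have hK : Kt = S.KP L' P := by
    rw [hKt]
    simp only [KP, At, Matrix.mul_sub, Matrix.mul_assoc]
    abel
  have hM : S.A - S.B * Kt - S.C * L' = S.At L' - S.B * Kt := by
    simp only [At]
    abel
  rw [hM] at hKtstab ⊢
  set M := S.At L' - S.B * Kt with hMdef
  set Δ := L' - L with hΔ
  set F := S.FP L P
  set W := S.WP L P
  set U := (S.Q - L'ᵀ * S.Rv * L') + Ktᵀ * S.Ru * Kt
  have h1 : U + Mᵀ * P * M = P + (Δᵀ * F + Fᵀ * Δ) - Δᵀ * W * Δ := by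
    have e := S.riccati_expand hP L Δ
    rw [show L + Δ = L' by rw [hΔ]; abel, show S.ricMap L P = P from hric.symm] at e
    have := S.step_cost hP L' Kt
    rwa [e, ← hK, sub_self, Matrix.mul_zero, add_zero] at this
  have h2 : U + Mᵀ * P' * M = P' + (Kt - S.KP L' P')ᵀ * (S.Ru + (S.B)ᵀ * P' * S.B)
      * (Kt - S.KP L' P') := by
    have := S.step_cost hP' L' Kt
    rwa [show S.ricMap L' P' = P' from hric'.symm] at this
  have hpsd := (S.posDef_G hP').posSemidef.conjTranspose_mul_mul_same (Kt - S.KP L' P')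
  rw [conjTranspose_eq_transpose_of_trivial] at hpsd
  have hquad : ∀ (X : Matrix (Fin d) (Fin d) ℝ) (y : Fin d → ℝ),
      y ⬝ᵥ ((Mᵀ * X * M) *ᵥ y) = (M *ᵥ y) ⬝ᵥ (X *ᵥ (M *ᵥ y)) := by
    intro X y
    rw [← Matrix.mulVec_mulVec, ← Matrix.mulVec_mulVec, Matrix.dotProduct_mulVec,
      Matrix.vecMul_transpose]
  have hstep : ∀ y : Fin d → ℝ, y ⬝ᵥ ((P' - P) *ᵥ y) ≤
      y ⬝ᵥ ((Δᵀ * F + Fᵀ * Δ - Δᵀ * W * Δ) *ᵥ y) + (M *ᵥ y) ⬝ᵥ ((P' - P) *ᵥ (M *ᵥ y)) := by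
    intro y
    rw [← hquad]
    have hy : 0 ≤ y ⬝ᵥ (((Kt - S.KP L' P')ᵀ * (S.Ru + (S.B)ᵀ * P' * S.B)
      * (Kt - S.KP L' P')) *ᵥ y) := by simpa using hpsd.dotProduct_mulVec_nonneg y
    have e : Δᵀ * F + Fᵀ * Δ - Δᵀ * W * Δ + Mᵀ * (P' - P) * M
        = (P' - P) + (Kt - S.KP L' P')ᵀ * (S.Ru + (S.B)ᵀ * P' * S.B)
          * (Kt - S.KP L' P') := by
      rw [Matrix.mul_sub Mᵀ, Matrix.sub_mul _ _ M, eq_sub_of_add_eq' h2, eq_sub_of_add_eq' h1]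
      abel
    rw [← dotProduct_add, ← Matrix.add_mulVec, e, Matrix.add_mulVec, dotProduct_add]
    linarith
  have key := lyapunov_bound M (P' - P) _ hKtstab hstep x
  set Γ := ∑' t : ℕ, vecMulVec (M ^ t *ᵥ x) (M ^ t *ᵥ x) with hΓ
  have hΓt : Γᵀ = Γ := by
    rw [hΓ, Matrix.transpose_tsum]
    simp only [Matrix.transpose_vecMulVec]
  -- `ΔᵀF` and its transpose have the same trace against the symmetric `Γ`.
  have htr : (Γ * (Fᵀ * Δ)).trace = (Γ * (Δᵀ * F)).trace := by
    rw [← Matrix.trace_transpose (Γ * (Fᵀ * Δ)), Matrix.transpose_mul, hΓt, Matrix.transpose_mul,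
      Matrix.transpose_transpose, Matrix.trace_mul_comm]
  rw [Matrix.sub_mulVec, dotProduct_sub, Matrix.mul_sub Γ, Matrix.mul_add Γ, Matrix.trace_sub,
    Matrix.trace_add, htr] at key
  simp only [Matrix.mul_assoc] at key ⊢
  linarith
end
end

section
/- Let L ∈ ℝ^{m₂×d} with a symmetric positive definite matrix P satisfying the inner Riccati equation for L and ρ(Ã_L − B·K_P(L)) < 1, such that W_P(L) is positive definite. Let 0 ≤ η ≤ 1/2 and set L′ := L + 2η·W_P(L)⁻¹F_P(L). Suppose P′ is a symmetric positive definite matrix satisfying the inner Riccati equation for L′ with ρ(Ã_{L′} − B·K_{P′}(L′)) < 1. Let Σ₀ ∈ ℝ^{d×d} be symmetric positive definite with μ := λ_min(Σ₀). Then tr(Σ₀P′) − tr(Σ₀P) ≥ 2ημ·tr(F_P(L)ᵀ W_P(L)⁻¹ F_P(L)). -/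
/-!
Write `T = Rᵘ + BᵀPB`, `G = P - P B T⁻¹ Bᵀ P`, `F = F_P(L)`, `W = W_P(L)`.

Freezing `P` and moving only `L`, the right-hand side of the inner Riccati equation is
`Q - LᵀRᵛL + (A - CL)ᵀ G (A - CL)`, a quadratic in `L` whose increment under
`L ↦ L + D` is `DᵀF + FᵀD - DᵀWD` (`outer_expansion`). The step `2η W⁻¹F` therefore raises it by `(4η - 4η²) FᵀW⁻¹F`, which
dominates `2η FᵀW⁻¹F` for `0 ≤ η ≤ 1/2`.

With `K'` the inner response at `(L', P')` and `M = A - CL' - BK'`, completing the square in the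
gain (`inner_complete_square`) and subtracting the two Riccati equations gives the Stein equation
`P' - P = Mᵀ (P' - P) M + N`, with `N = (4η - 4η²) FᵀW⁻¹F + EᵀTE` where `E` is the difference
between `K'` and the gain that is optimal against `P`. As `N ≥ 0` and `M` is stable, `P' - P ≥ 0`
(`posSemidef_of_stein`, resting on Gelfand's formula); feeding this back into the equation
yields `P' - P ≥ N ≥ 2η FᵀW⁻¹F`. The claim follows by taking the trace against `Σ₀ ≥ μ I`.
-/

open Matrix

noncomputable section

open Filter Topology

/-! ### Stability and the Stein equation -/

section Norm

attribute [local instance] Matrix.linftyOpNormedRing Matrix.linftyOpNormedAlgebra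

/-- Powers of a complex matrix with spectral radius below one tend to zero, by Gelfand's formula. -/
lemma tendsto_pow_entry_complex {n : ℕ} (M : Matrix (Fin n) (Fin n) ℂ)
    (h : spectralRadius ℂ M < 1) (i j : Fin n) :
    Tendsto (fun k : ℕ => (M ^ k) i j) atTop (𝓝 0) := by
  have : CompleteSpace (Matrix (Fin n) (Fin n) ℂ) := FiniteDimensional.complete ℂ _
  obtain ⟨r, hr, hr1⟩ := ENNReal.lt_iff_exists_nnreal_btwn.mp h
  have hr1' : r < 1 := by exact_mod_cast hr1
  have hev := (spectrum.pow_nnnorm_pow_one_div_tendsto_nhds_spectralRadius M).eventually_lt_const hr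
  refine squeeze_zero_norm' ?_ (tendsto_pow_atTop_nhds_zero_of_lt_one r.2 (by exact_mod_cast hr1'))
  filter_upwards [hev, eventually_gt_atTop 0] with k hk hk0
  have hk0' : (0 : ℝ) < k := by exact_mod_cast hk0
  have h1 : ‖M ^ k‖₊ ≤ r ^ k := by
    have := ENNReal.rpow_le_rpow hk.le hk0'.le
    rw [← ENNReal.rpow_mul, one_div, inv_mul_cancel₀ hk0'.ne', ENNReal.rpow_one,
      ENNReal.rpow_natCast] at this
    exact_mod_cast this
  have h2 : ‖(M ^ k) i j‖₊ ≤ ‖M ^ k‖₊ := by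
    rw [Matrix.linfty_opNNNorm_def]
    exact (Finset.single_le_sum (f := fun j => ‖(M ^ k) i j‖₊) (fun _ _ => zero_le)
      (Finset.mem_univ j)).trans
      (Finset.le_sup (f := fun i => ∑ j, ‖(M ^ k) i j‖₊) (Finset.mem_univ i))
  exact_mod_cast h2.trans h1

end Norm

lemma tendsto_pow_entry {n : ℕ} (M : Matrix (Fin n) (Fin n) ℝ) (h : specRad M < 1)
    (i j : Fin n) : Tendsto (fun k : ℕ => (M ^ k) i j) atTop (𝓝 0) := by
  have hc := tendsto_pow_entry_complex _ h i j
  have he : ∀ k : ℕ, (M.map (algebraMap ℝ ℂ)) ^ k = (M ^ k).map (algebraMap ℝ ℂ) := fun k =>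
    (map_pow ((algebraMap ℝ ℂ).mapMatrix) M k).symm
  simp only [he, Matrix.map_apply] at hc
  have := (Complex.continuous_re.tendsto 0).comp hc
  simpa [Function.comp_def] using this

/-- Along a stable trajectory `x, M x, M² x, …` the form `xᵀ D x` is nonincreasing and tends to
zero, so it is nonnegative: a solution of a Stein equation with positive semidefinite source is
positive semidefinite. -/
lemma posSemidef_of_stein {n : ℕ} {M D N : Matrix (Fin n) (Fin n) ℝ} (h : specRad M < 1)
    (hD : D.IsHermitian) (hN : N.PosSemidef) (hEq : D = Mᵀ * D * M + N) : D.PosSemidef := by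
  refine .of_dotProduct_mulVec_nonneg hD fun x => ?_
  simp only [star_trivial]
  have step : ∀ y : Fin n → ℝ, (M *ᵥ y) ⬝ᵥ (D *ᵥ (M *ᵥ y)) ≤ y ⬝ᵥ (D *ᵥ y) := by
    intro y
    have h1 : y ⬝ᵥ (D *ᵥ y) = (M *ᵥ y) ⬝ᵥ (D *ᵥ (M *ᵥ y)) + y ⬝ᵥ (N *ᵥ y) := by
      conv_lhs => rw [hEq]
      rw [add_mulVec, dotProduct_add, ← mulVec_mulVec, ← mulVec_mulVec, mulVec_transpose,
        dotProduct_comm y, ← dotProduct_mulVec, dotProduct_comm]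
    have h2 := hN.dotProduct_mulVec_nonneg y
    simp only [star_trivial] at h2
    linarith
  have anti : ∀ k : ℕ, ((M ^ k) *ᵥ x) ⬝ᵥ (D *ᵥ ((M ^ k) *ᵥ x)) ≤ x ⬝ᵥ (D *ᵥ x) := by
    intro k
    induction k with
    | zero => simp
    | succ k ih =>
      rw [pow_succ', ← mulVec_mulVec]
      exact (step _).trans ih
  have hlim : Tendsto (fun k : ℕ => (M ^ k) *ᵥ x) atTop (𝓝 0) := by
    rw [tendsto_pi_nhds]
    intro i
    simp only [mulVec, dotProduct]
    have := tendsto_finsetSum (Finset.univ : Finset (Fin n)) fun j _ =>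
      (tendsto_pow_entry M h i j).mul_const (x j)
    simpa using this
  have hcont : Continuous fun y : Fin n → ℝ => y ⬝ᵥ (D *ᵥ y) := by fun_prop
  have hq := (hcont.tendsto 0).comp hlim
  simp only [zero_dotProduct] at hq
  exact le_of_tendsto hq (Eventually.of_forall anti)

/-! ### Trace inequalities -/

open MatrixOrder in
lemma trace_mul_nonneg_of_posSemidef {n : ℕ} {X Y : Matrix (Fin n) (Fin n) ℝ}
    (hX : X.PosSemidef) (hY : Y.PosSemidef) : 0 ≤ (X * Y).trace := by
  obtain ⟨Z, rfl⟩ := CStarAlgebra.nonneg_iff_eq_star_mul_self.mp hY.nonneg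
  rw [Matrix.star_eq_conjTranspose, ← Matrix.mul_assoc, Matrix.trace_mul_comm, ← Matrix.mul_assoc]
  exact (hX.mul_mul_conjTranspose_same Z).trace_nonneg

/-- The real spectrum of `X` is finite, so `lamMin X` is a genuine lower bound for it and
`X - lamMin X • 1` is positive semidefinite; in dimension zero both sides vanish. -/
lemma lamMin_mul_trace_le {n : ℕ} {X Y : Matrix (Fin n) (Fin n) ℝ}
    (hX : X.PosDef) (hY : Y.PosSemidef) : lamMin X * Y.trace ≤ (X * Y).trace := by
  have hps : (X - lamMin X • (1 : Matrix (Fin n) (Fin n) ℝ)).PosSemidef := by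
    rw [Matrix.posSemidef_iff_isHermitian_and_spectrum_nonneg]
    refine ⟨hX.isHermitian.sub (by simp [Matrix.IsHermitian]), fun a ha => ?_⟩
    rw [← Algebra.algebraMap_eq_smul_one, ← spectrum.sub_singleton_eq] at ha
    obtain ⟨b, hb, c, hc, rfl⟩ := Set.mem_sub.mp ha
    obtain rfl := Set.mem_singleton_iff.mp hc
    have hbdd : BddBelow (spectrum ℝ X) := by
      rw [hX.isHermitian.spectrum_real_eq_range_eigenvalues]
      exact (Set.finite_range _).bddBelow
    exact sub_nonneg.mpr (csInf_le hbdd hb)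
  have := trace_mul_nonneg_of_posSemidef hps hY
  rw [Matrix.sub_mul, Matrix.trace_sub, Matrix.smul_mul, Matrix.one_mul, Matrix.trace_smul,
    smul_eq_mul] at this
  linarith

/-! ### Quadratic identities -/

/-- Completion of the square in the minimizing player's gain `K`. -/
lemma inner_complete_square {d m : ℕ} {R : Matrix (Fin m) (Fin m) ℝ}
    {P a : Matrix (Fin d) (Fin d) ℝ} (B : Matrix (Fin d) (Fin m) ℝ)
    (hR : R.PosDef) (hP : P.PosDef) (K : Matrix (Fin m) (Fin d) ℝ) :
    Kᵀ * R * K + (a - B * K)ᵀ * P * (a - B * K)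
      = aᵀ * P * a - aᵀ * P * B * (R + Bᵀ * P * B)⁻¹ * Bᵀ * P * a
        + (K - (R + Bᵀ * P * B)⁻¹ * Bᵀ * P * a)ᵀ * (R + Bᵀ * P * B)
          * (K - (R + Bᵀ * P * B)⁻¹ * Bᵀ * P * a) := by
  have hPt : Pᵀ = P := hP.isHermitian
  have hT : (R + Bᵀ * P * B).PosDef :=
    hR.add_posSemidef (hP.posSemidef.conjTranspose_mul_mul_same B)
  generalize hTe : R + Bᵀ * P * B = T at hT ⊢
  obtain rfl : R = T - Bᵀ * P * B := by rw [← hTe, add_sub_cancel_right]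
  have hTt : Tᵀ = T := hT.isHermitian
  have hdet : IsUnit T.det := (Matrix.isUnit_iff_isUnit_det T).mp hT.isUnit
  have hHt : (T⁻¹)ᵀ = T⁻¹ := by rw [Matrix.transpose_nonsing_inv, hTt]
  simp only [transpose_sub, transpose_mul, transpose_transpose, hPt, hHt, Matrix.mul_sub,
    Matrix.sub_mul, Matrix.mul_assoc, Matrix.mul_nonsing_inv_cancel_left _ _ hdet,
    Matrix.nonsing_inv_mul_cancel_left _ _ hdet]
  abel

/-- Second-order expansion of the inner value in the maximizing player's gain around `L`, with
linear part `DᵀF + FᵀD` and quadratic part `-DᵀWD`; here `a = A - C L` and `G` is symmetric. -/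
lemma outer_expansion {d m : ℕ} {R W : Matrix (Fin m) (Fin m) ℝ}
    {G a : Matrix (Fin d) (Fin d) ℝ} {C : Matrix (Fin d) (Fin m) ℝ}
    {L D F : Matrix (Fin m) (Fin d) ℝ} (hR : Rᵀ = R) (hG : Gᵀ = G)
    (hF : F = -(R * L) - Cᵀ * G * a) (hW : W = R - Cᵀ * G * C) :
    (a - C * D)ᵀ * G * (a - C * D) - (L + D)ᵀ * R * (L + D)
      = aᵀ * G * a - Lᵀ * R * L + (Dᵀ * F + Fᵀ * D - Dᵀ * W * D) := by
  subst hF hW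
  simp only [transpose_sub, transpose_add, transpose_neg, transpose_mul, transpose_transpose, hG,
    hR, Matrix.mul_sub, Matrix.sub_mul, Matrix.mul_add, Matrix.add_mul, Matrix.mul_neg,
    Matrix.neg_mul, Matrix.mul_assoc]
  abel

open LQ in
/-- One-step progress of the Gauss–Newton nested-gradient update
`L' = L + 2η W_P(L)⁻¹ F_P(L)` with `0 ≤ η ≤ 1/2`:
`tr(Σ₀P') - tr(Σ₀P) ≥ 2ημ · tr(F_P(L)ᵀ W_P(L)⁻¹ F_P(L))` where `μ = λ_min(Σ₀)`. -/
theorem gauss_newton_step_progress {d m₁ m₂ : ℕ} (S : LQ d m₁ m₂)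
    (L : Matrix (Fin m₂) (Fin d) ℝ) (P : Matrix (Fin d) (Fin d) ℝ)
    (hP : P.PosDef) (hric : S.Riccati L P)
    (hstab : specRad (S.At L - S.B * S.KP L P) < 1)
    (hW : (S.WP L P).PosDef)
    (η : ℝ) (hη₀ : 0 ≤ η) (hη₁ : η ≤ 1 / 2)
    (L' : Matrix (Fin m₂) (Fin d) ℝ) (hL' : L' = L + (2 * η) • ((S.WP L P)⁻¹ * S.FP L P))
    (P' : Matrix (Fin d) (Fin d) ℝ) (hP' : P'.PosDef) (hric' : S.Riccati L' P')
    (hstab' : specRad (S.At L' - S.B * S.KP L' P') < 1)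
    (Sig0 : Matrix (Fin d) (Fin d) ℝ) (hSig0 : Sig0.PosDef) :
    2 * η * lamMin Sig0 * ((S.FP L P)ᵀ * (S.WP L P)⁻¹ * S.FP L P).trace ≤
      (Sig0 * P').trace - (Sig0 * P).trace := by
  have hPt : Pᵀ = P := hP.isHermitian
  have hP't : P'ᵀ = P' := hP'.isHermitian
  have hRvt : (S.Rv)ᵀ = S.Rv := S.hRv.isHermitian
  obtain ⟨T, hT⟩ : ∃ T, T = S.Ru + (S.B)ᵀ * P * S.B := ⟨_, rfl⟩
  have hTpd : T.PosDef := hT ▸ S.hRu.add_posSemidef (hP.posSemidef.conjTranspose_mul_mul_same S.B)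
  have hTit : (T⁻¹)ᵀ = T⁻¹ := hTpd.inv.isHermitian
  obtain ⟨G, hG⟩ : ∃ G, G = P - P * S.B * T⁻¹ * (S.B)ᵀ * P := ⟨_, rfl⟩
  have hGt : Gᵀ = G := by
    simp only [hG, transpose_sub, transpose_mul, transpose_transpose, hPt, hTit, Matrix.mul_assoc]
  obtain ⟨F, hFdef⟩ : ∃ F, F = S.FP L P := ⟨_, rfl⟩
  obtain ⟨W, hWdef⟩ : ∃ W, W = S.WP L P := ⟨_, rfl⟩
  rw [← hFdef, ← hWdef] at hL' ⊢
  rw [← hWdef] at hW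
  have hF : F = -(S.Rv * L) - (S.C)ᵀ * G * S.At L := by
    rw [hFdef, LQ.FP, LQ.KP, LQ.At, hG, ← hT]
    simp only [Matrix.mul_sub, Matrix.sub_mul,
      Matrix.add_mul, Matrix.neg_mul, Matrix.mul_assoc]
    abel
  have hW' : W = S.Rv - (S.C)ᵀ * G * S.C := by rw [hWdef, LQ.WP, ← hT, hG]
  have hWt : Wᵀ = W := hW.isHermitian
  have hWdet : IsUnit W.det := (Matrix.isUnit_iff_isUnit_det W).mp hW.isUnit
  have hWit : (W⁻¹)ᵀ = W⁻¹ := hW.inv.isHermitian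
  have hAt : S.At L' = S.At L - S.C * ((2 * η) • (W⁻¹ * F)) := by
    rw [hL', LQ.At, LQ.At, Matrix.mul_add, sub_sub]
  have hricG : P = S.Q + ((S.At L)ᵀ * G * S.At L - Lᵀ * S.Rv * L) := by
    refine hric.trans ?_
    rw [hG, ← hT]
    simp only [Matrix.mul_sub, Matrix.sub_mul, Matrix.mul_assoc]
    abel
  obtain ⟨X, hX⟩ : ∃ X, X = Fᵀ * W⁻¹ * F := ⟨_, rfl⟩
  rw [← hX]
  have hXps : X.PosSemidef := hX ▸ hW.inv.posSemidef.conjTranspose_mul_mul_same F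
  -- The Gauss–Newton step raises the Riccati operator of the old `P` by `(4η - 4η²) Fᵀ W⁻¹ F`.
  have hgain : S.Q - L'ᵀ * S.Rv * L' + (S.At L')ᵀ * G * S.At L' - P
      = (4 * η - 4 * η ^ 2) • X := by
    have h1 := outer_expansion (D := (2 * η) • (W⁻¹ * F)) hRvt hGt hF hW'
    rw [← hAt, ← hL'] at h1
    have h2 : S.Q - L'ᵀ * S.Rv * L' + (S.At L')ᵀ * G * S.At L' - P
        = ((S.At L')ᵀ * G * S.At L' - L'ᵀ * S.Rv * L')
          - ((S.At L)ᵀ * G * S.At L - Lᵀ * S.Rv * L) := by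
      conv_lhs => rw [hricG]
      abel
    rw [h2, h1, add_sub_cancel_left]
    simp only [transpose_smul, transpose_mul, hWit, Matrix.smul_mul, Matrix.mul_smul,
      Matrix.mul_assoc, Matrix.mul_nonsing_inv_cancel_left _ _ hWdet, hX]
    module
  obtain ⟨K', hK'⟩ : ∃ K', K' = S.KP L' P' := ⟨_, rfl⟩
  obtain ⟨M, hM⟩ : ∃ M, M = S.At L' - S.B * K' := ⟨_, rfl⟩
  rw [← hK', ← hM] at hstab'
  have hP'eq : P' = S.Q - L'ᵀ * S.Rv * L' + (K'ᵀ * S.Ru * K' + Mᵀ * P' * M) := by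
    rw [hM, inner_complete_square S.B S.hRu hP' K']
    have h0 : K' - (S.Ru + (S.B)ᵀ * P' * S.B)⁻¹ * (S.B)ᵀ * P' * S.At L' = 0 := by
      rw [hK', LQ.KP, sub_self]
    rw [h0]
    simp only [Matrix.mul_zero, add_zero]
    exact hric'.trans (by abel)
  have hsq := inner_complete_square (a := S.At L') S.B S.hRu hP K'
  rw [← hT, ← hM] at hsq
  obtain ⟨E, hE⟩ : ∃ E, E = K' - T⁻¹ * (S.B)ᵀ * P * S.At L' := ⟨_, rfl⟩
  rw [← hE] at hsq
  obtain ⟨N, hN⟩ : ∃ N, N = (4 * η - 4 * η ^ 2) • X + Eᵀ * T * E := ⟨_, rfl⟩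
  have hc : 0 ≤ 4 * η - 4 * η ^ 2 := by nlinarith
  have hEps : (Eᵀ * T * E).PosSemidef := hTpd.posSemidef.conjTranspose_mul_mul_same E
  have hNps : N.PosSemidef := hN ▸ (hXps.smul hc).add hEps
  -- Deviating from the minimizing response to `P` only adds the square `Eᵀ T E`.
  have hstein : P' - P = Mᵀ * (P' - P) * M + N := by
    have h3 : (S.At L')ᵀ * P * S.At L' - (S.At L')ᵀ * P * S.B * T⁻¹ * (S.B)ᵀ * P * S.At L'
        = (S.At L')ᵀ * G * S.At L' := by
      simp only [hG, Matrix.mul_sub, Matrix.sub_mul, Matrix.mul_assoc]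
    rw [h3] at hsq
    have h4 : Mᵀ * P * M
        = (S.At L')ᵀ * G * S.At L' + Eᵀ * T * E - K'ᵀ * S.Ru * K' := by
      rw [← hsq]; abel
    conv_lhs => rw [hP'eq]
    rw [Matrix.mul_sub, Matrix.sub_mul, h4, hN, ← hgain]
    abel
  have hΔ : (P' - P).PosSemidef :=
    posSemidef_of_stein hstab' (hP'.isHermitian.sub hP.isHermitian) hNps hstein
  have hrest : (P' - P - (2 * η) • X).PosSemidef := by
    have h5 : P' - P - (2 * η) • X
        = Mᵀ * (P' - P) * M + ((2 * η * (1 - 2 * η)) • X + Eᵀ * T * E) := by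
      conv_lhs => rw [hstein, hN]
      module
    rw [h5]
    exact (hΔ.conjTranspose_mul_mul_same M).add
      ((hXps.smul (mul_nonneg (by linarith) (by linarith))).add hEps)
  have ht1 := trace_mul_nonneg_of_posSemidef hSig0.posSemidef hrest
  rw [Matrix.mul_sub, Matrix.mul_sub, Matrix.mul_smul, Matrix.trace_sub, Matrix.trace_sub,
    Matrix.trace_smul, smul_eq_mul] at ht1
  have ht2 := mul_le_mul_of_nonneg_left (lamMin_mul_trace_le hSig0 hXps)
    (by linarith : (0 : ℝ) ≤ 2 * η)
  linarith
end
end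

section
/- Let L, L⋆ ∈ ℝ^{m₂×d}, and let P, P⋆ be symmetric positive definite matrices satisfying the inner Riccati equation for L and L⋆ respectively, with ρ(Ã_L − B·K_P(L)) < 1 and ρ(Ã_{L⋆} − B·K_{P⋆}(L⋆)) < 1, and suppose W_P(L) is positive definite. Define K̃ := (Rᵘ + BᵀPB)⁻¹BᵀP(A − CL⋆) and suppose ρ(A − BK̃ − CL⋆) < 1. Let Σ₀ ∈ ℝ^{d×d} be symmetric positive definite and let Σ_{K̃,L⋆} := Σ_{t≥0} (A − BK̃ − CL⋆)ᵗ Σ₀ ((A − BK̃ − CL⋆)ᵀ)ᵗ. Then tr(Σ₀P⋆) − tr(Σ₀P) ≤ ‖Σ_{K̃,L⋆}‖ · tr(F_P(L)ᵀ W_P(L)⁻¹ F_P(L)), where ‖·‖ denotes the spectral norm. -/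
/-!
Write `G = P - PB(Rᵘ + BᵀPB)⁻¹BᵀP`, let `𝓡_L(P)` be the right-hand side of the inner Riccati equation
and `M = A - BK̃ - CL⋆`. Two completions of the square drive the proof.

* In the control gain (`riccati_complete_square`): for every `K`, the one-step cost
  `Q̃_L + KᵀRᵘK + (Ã_L - BK)ᵀP(Ã_L - BK)` equals `𝓡_L(P)` plus the square of `K - K_P(L)` weighted
  by `Rᵘ + BᵀPB`. With `L = L⋆` and `K = K̃`, the square vanishes for `P` and is positive
  semidefinite for `P⋆`.
* In the adversary gain: since `F_P(L) = -W L - CᵀGA` with `W = W_P(L)`, the difference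
  `𝓡_{L⋆}(P) - 𝓡_L(P)` is the quadratic `ΔᵀF + FᵀΔ - ΔᵀWΔ` in `Δ = L⋆ - L`
  (`LQ.riccatiMap_sub`), which is `FᵀW⁻¹F` minus a positive semidefinite square
  (`riccati_gap_complete_square`).

As `P = 𝓡_L(P)` and `P⋆ = 𝓡_{L⋆}(P⋆)`, the gap `X = P⋆ - P` satisfies `X - MᵀXM = FᵀW⁻¹F - Y`
with `Y` positive semidefinite. Because `ρ(M) < 1`, the series `Σ` converges and solves
`Σ = Σ₀ + MΣMᵀ` (`lyapunov_tsum`), so `tr(Σ₀X) = tr(Σ(X - MᵀXM)) ≤ tr(Σ FᵀW⁻¹F)`, and the last trace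
is at most `‖Σ‖ tr(FᵀW⁻¹F)` by Cauchy–Schwarz (`trace_mul_le_specNorm`).
-/

open Matrix

noncomputable section

/-- Completion of the square in the gain `K`: the one-step cost of `K` exceeds its minimum, attained at
`(R + BᵀPB)⁻¹BᵀPT`, by a square weighted by `R + BᵀPB`. -/
theorem riccati_complete_square {d m : ℕ} (T P : Matrix (Fin d) (Fin d) ℝ)
    (B : Matrix (Fin d) (Fin m) ℝ) (R : Matrix (Fin m) (Fin m) ℝ)
    (hP : P.PosSemidef) (hR : R.PosDef) (K : Matrix (Fin m) (Fin d) ℝ) :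
    Kᵀ * R * K + (T - B * K)ᵀ * P * (T - B * K) =
      Tᵀ * P * T - Tᵀ * P * B * (R + Bᵀ * P * B)⁻¹ * Bᵀ * P * T
      + (K - (R + Bᵀ * P * B)⁻¹ * Bᵀ * P * T)ᵀ * (R + Bᵀ * P * B)
        * (K - (R + Bᵀ * P * B)⁻¹ * Bᵀ * P * T) := by
  have hPt : Pᵀ = P := by simpa using hP.isHermitian.eq
  have hH : (R + Bᵀ * P * B).PosDef := by
    have := hP.conjTranspose_mul_mul_same B
    simp only [conjTranspose_eq_transpose_of_trivial] at this
    exact hR.add_posSemidef this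
  -- Eliminate `R` so that `H = R + BᵀPB` and its inverse can be treated as formal symbols.
  have hR' : R = (R + Bᵀ * P * B) - Bᵀ * P * B := by simp
  have hu : IsUnit (R + Bᵀ * P * B).det := (Matrix.isUnit_iff_isUnit_det _).1 hH.isUnit
  have hHt : (R + Bᵀ * P * B)ᵀ = R + Bᵀ * P * B := by simpa using hH.isHermitian.eq
  generalize R + Bᵀ * P * B = H at *
  have h1 := mul_nonsing_inv H hu
  have h2 := nonsing_inv_mul H hu
  have h3 : (H⁻¹)ᵀ = H⁻¹ := by rw [transpose_nonsing_inv, hHt]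
  generalize H⁻¹ = J at *
  have h4 (X : Matrix (Fin m) (Fin d) ℝ) : H * (J * X) = X := by rw [← Matrix.mul_assoc, h1, Matrix.one_mul]
  have h5 (X : Matrix (Fin m) (Fin d) ℝ) : J * (H * X) = X := by rw [← Matrix.mul_assoc, h2, Matrix.one_mul]
  subst hR'
  simp only [transpose_sub, transpose_mul, Matrix.mul_sub, Matrix.sub_mul, hPt, h3, Matrix.mul_assoc,
    transpose_transpose, h4, h5]
  abel

/-- Maximization of a concave matrix quadratic in `D`; the maximizer is `W⁻¹F`. -/
theorem riccati_gap_complete_square {d m : ℕ} (W : Matrix (Fin m) (Fin m) ℝ) (hW : W.PosDef)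
    (F D : Matrix (Fin m) (Fin d) ℝ) :
    Dᵀ * F + Fᵀ * D - Dᵀ * W * D =
      Fᵀ * W⁻¹ * F - (D - W⁻¹ * F)ᵀ * W * (D - W⁻¹ * F) := by
  have hu : IsUnit W.det := (Matrix.isUnit_iff_isUnit_det _).1 hW.isUnit
  have hWt : Wᵀ = W := by simpa using hW.isHermitian.eq
  have h1 := mul_nonsing_inv W hu
  have h2 := nonsing_inv_mul W hu
  have h3 : (W⁻¹)ᵀ = W⁻¹ := by rw [transpose_nonsing_inv, hWt]
  generalize W⁻¹ = J at *
  have h4 (X : Matrix (Fin m) (Fin d) ℝ) : W * (J * X) = X := by rw [← Matrix.mul_assoc, h1, Matrix.one_mul]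
  have h5 (X : Matrix (Fin m) (Fin d) ℝ) : J * (W * X) = X := by rw [← Matrix.mul_assoc, h2, Matrix.one_mul]
  simp only [transpose_sub, transpose_mul, Matrix.mul_sub, Matrix.sub_mul, h3, Matrix.mul_assoc,
    h4, h5]
  abel

namespace LQ

/-- The right-hand side of the inner Riccati equation for `L`, as a function of `P`; `S.Riccati L P`
unfolds to `P = S.riccatiMap L P`. -/
def riccatiMap {d m₁ m₂ : ℕ} (S : LQ d m₁ m₂) (L : Matrix (Fin m₂) (Fin d) ℝ)
    (P : Matrix (Fin d) (Fin d) ℝ) : Matrix (Fin d) (Fin d) ℝ :=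
  (S.Q - Lᵀ * S.Rv * L) + (S.At L)ᵀ * P * S.At L
      - (S.At L)ᵀ * P * S.B * (S.Ru + (S.B)ᵀ * P * S.B)⁻¹ * (S.B)ᵀ * P * S.At L

/-- For fixed `P`, the Riccati map is exactly quadratic in the adversary gain: its gradient is governed
by `F_P(L)` and its Hessian by `-W_P(L)`. -/
theorem riccatiMap_sub {d m₁ m₂ : ℕ} (S : LQ d m₁ m₂) (L L' : Matrix (Fin m₂) (Fin d) ℝ)
    (P : Matrix (Fin d) (Fin d) ℝ) (hP : Pᵀ = P) :
    S.riccatiMap L' P - S.riccatiMap L P =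
      (L' - L)ᵀ * S.FP L P + (S.FP L P)ᵀ * (L' - L) - (L' - L)ᵀ * S.WP L P * (L' - L) := by
  have hRu : S.Ruᵀ = S.Ru := by simpa using S.hRu.isHermitian.eq
  have hRv : S.Rvᵀ = S.Rv := by simpa using S.hRv.isHermitian.eq
  have hJ : ((S.Ru + (S.B)ᵀ * P * S.B)⁻¹)ᵀ = (S.Ru + (S.B)ᵀ * P * S.B)⁻¹ := by
    rw [transpose_nonsing_inv]; simp [hRu, hP, Matrix.mul_assoc]
  simp only [riccatiMap, FP, WP, KP, At]
  generalize (S.Ru + (S.B)ᵀ * P * S.B)⁻¹ = J at *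
  simp only [transpose_sub, transpose_add, transpose_neg, transpose_mul, Matrix.mul_sub, Matrix.sub_mul,
    Matrix.add_mul, Matrix.mul_add, Matrix.neg_mul, Matrix.mul_neg, hJ, hP, hRv,
    transpose_transpose, Matrix.mul_assoc]
  abel

end LQ

open scoped MatrixOrder ComplexOrder in
theorem exists_eq_transpose_mul_self {n : ℕ} {Z : Matrix (Fin n) (Fin n) ℝ} (hZ : Z.PosSemidef) :
    ∃ N : Matrix (Fin n) (Fin n) ℝ, Z = Nᵀ * N := by
  obtain ⟨N, hN⟩ := CStarAlgebra.nonneg_iff_eq_star_mul_self.mp hZ.nonneg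
  exact ⟨N, by rw [hN, star_eq_conjTranspose, conjTranspose_eq_transpose_of_trivial]⟩

/-- Writing `Z = NᵀN`, the trace `tr(XZ)` is the sum of `⟪v, X v⟫` over the rows `v` of `N`, while
`tr Z` is the sum of `‖v‖²`. -/
theorem trace_mul_le_specNorm {n : ℕ} (X Z : Matrix (Fin n) (Fin n) ℝ) (hZ : Z.PosSemidef) :
    (X * Z).trace ≤ specNorm X * Z.trace := by
  obtain ⟨N, rfl⟩ := exists_eq_transpose_mul_self hZ
  rw [← Matrix.mul_assoc, trace_mul_comm,
    trace_mul_comm Nᵀ N]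
  simp only [Matrix.trace, Finset.mul_sum, Matrix.diag]
  refine Finset.sum_le_sum fun i _ => ?_
  set v : EuclideanSpace ℝ (Fin n) := WithLp.toLp 2 (N i)
  have e1 : (N * (X * Nᵀ)) i i = inner ℝ v (toEuclideanLin X v) := by
    simp [v, Matrix.mul_apply, PiLp.inner_apply, toLpLin_apply, mulVec, dotProduct, mul_comm]
  have e2 : (N * Nᵀ) i i = ‖v‖ ^ 2 := by
    rw [EuclideanSpace.norm_sq_eq]
    simp [v, Matrix.mul_apply, pow_two]
  rw [e1, e2]
  have h := (toEuclideanLin X).toContinuousLinearMap.le_opNorm v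
  have h' := real_inner_le_norm v (toEuclideanLin X v)
  simp only [specNorm]
  calc _ ≤ _ := h'
    _ ≤ ‖v‖ * (‖(toEuclideanLin X).toContinuousLinearMap‖ * ‖v‖) := by gcongr; exact h
    _ = _ := by ring

section
-- Gelfand's formula needs a Banach algebra structure on complex matrices; any submultiplicative norm
-- that dominates the entries works, and the Frobenius norm is one.
attribute [local instance] Matrix.frobeniusNormedRing Matrix.frobeniusNormedAlgebra

open Filter Topology in
/-- If `ρ(M) < 1`, the entries of `M ^ t` decay geometrically, by Gelfand's formula applied to the
complexification of `M`. -/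
theorem exists_entry_bound {n : ℕ} {M : Matrix (Fin n) (Fin n) ℝ} (h : specRad M < 1) :
    ∃ r : ℝ, 0 ≤ r ∧ r < 1 ∧ ∀ᶠ t : ℕ in atTop, ∀ i j, |(M ^ t) i j| ≤ r ^ t := by
  obtain ⟨r, hr, hr1⟩ := ENNReal.lt_iff_exists_nnreal_btwn.1 h
  refine ⟨r, r.2, by exact_mod_cast hr1, ?_⟩
  have hg := spectrum.pow_nnnorm_pow_one_div_tendsto_nhds_spectralRadius (M.map (algebraMap ℝ ℂ))
  filter_upwards [hg.eventually_lt_const hr, eventually_gt_atTop 0] with t ht ht0 i j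
  have h1 : (‖(M.map (algebraMap ℝ ℂ)) ^ t‖₊ : ENNReal) ≤ (r : ENNReal) ^ t := by
    have := ENNReal.rpow_le_rpow ht.le (z := t) (by positivity)
    rwa [← ENNReal.rpow_mul, one_div, inv_mul_cancel₀ (by positivity), ENNReal.rpow_one,
      ENNReal.rpow_natCast] at this
  have h2 : ‖(M.map (algebraMap ℝ ℂ)) ^ t‖ ≤ (r : ℝ) ^ t := by exact_mod_cast h1
  have h3 : (M.map (algebraMap ℝ ℂ)) ^ t = (M ^ t).map (algebraMap ℝ ℂ) :=
    (map_pow (algebraMap ℝ ℂ).mapMatrix M t).symm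
  rw [h3] at h2
  refine le_trans ?_ h2
  have h4 := PiLp.norm_apply_le (WithLp.toLp 2 fun i => WithLp.toLp 2 ((M ^ t).map (algebraMap ℝ ℂ) i)) i
  have h5 := PiLp.norm_apply_le (WithLp.toLp 2 ((M ^ t).map (algebraMap ℝ ℂ) i)) j
  have h6 : ‖((M ^ t).map (algebraMap ℝ ℂ)) i j‖ ≤ ‖(M ^ t).map (algebraMap ℝ ℂ)‖ := h5.trans h4
  rwa [map_apply, Complex.coe_algebraMap, Complex.norm_real, Real.norm_eq_abs] at h6
end

open Filter Topology Asymptotics in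
theorem summable_lyapunov {n : ℕ} {M : Matrix (Fin n) (Fin n) ℝ} (h : specRad M < 1)
    (Z : Matrix (Fin n) (Fin n) ℝ) : Summable fun t : ℕ => M ^ t * Z * (Mᵀ) ^ t := by
  obtain ⟨r, hr0, hr1, hr⟩ := exists_entry_bound h
  refine Pi.summable.2 fun i => Pi.summable.2 fun j => ?_
  simp only [← transpose_pow, Matrix.mul_apply, Finset.sum_mul, transpose_apply]
  refine summable_sum fun k _ => summable_sum fun l _ => ?_
  have hsum : Summable fun t : ℕ => |Z l k| * (r * r) ^ t :=
    (summable_geometric_of_lt_one (by positivity) (by nlinarith)).mul_left _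
  refine summable_of_isBigO_nat hsum (IsBigO.of_bound 1 ?_)
  filter_upwards [hr] with t ht
  have h1 := ht i l
  have h2 := ht j k
  rw [one_mul, Real.norm_eq_abs, Real.norm_of_nonneg (by positivity), abs_mul, abs_mul, mul_pow]
  calc _ ≤ r ^ t * |Z l k| * r ^ t := by gcongr
    _ = _ := by ring

/-- The series `∑ Mᵗ Z (Mᵀ)ᵗ` solves the discrete Lyapunov equation `Σ = Z + M Σ Mᵀ`. -/
theorem lyapunov_tsum {n : ℕ} {M : Matrix (Fin n) (Fin n) ℝ} (h : specRad M < 1)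
    (Z : Matrix (Fin n) (Fin n) ℝ) :
    ∑' t : ℕ, M ^ t * Z * (Mᵀ) ^ t = Z + M * (∑' t : ℕ, M ^ t * Z * (Mᵀ) ^ t) * Mᵀ := by
  have hs := summable_lyapunov h Z
  conv_lhs => rw [hs.tsum_eq_zero_add]
  rw [← hs.tsum_mul_left, ← (hs.mul_left M).tsum_mul_right]
  simp only [pow_zero, Matrix.one_mul, Matrix.mul_one]
  congr 2
  ext1 t
  rw [pow_succ' M, pow_succ Mᵀ]
  simp only [Matrix.mul_assoc]

theorem trace_lyapunov_mul_nonneg {n : ℕ} {M : Matrix (Fin n) (Fin n) ℝ} (h : specRad M < 1)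
    {Z Y : Matrix (Fin n) (Fin n) ℝ} (hZ : Z.PosSemidef) (hY : Y.PosSemidef) :
    0 ≤ ((∑' t : ℕ, M ^ t * Z * (Mᵀ) ^ t) * Y).trace := by
  have hs := summable_lyapunov h Z
  rw [← hs.tsum_mul_right]
  have := (hs.mul_right Y).map_tsum (traceAddMonoidHom (Fin n) ℝ) (continuous_id.matrix_trace)
  simp only [traceAddMonoidHom_apply] at this
  rw [this]
  refine tsum_nonneg fun t => ?_
  obtain ⟨N, rfl⟩ := exists_eq_transpose_mul_self hY
  have h1 := (hZ.mul_mul_conjTranspose_same (N * M ^ t)).trace_nonneg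
  rw [← Matrix.mul_assoc, trace_mul_comm]
  simpa [Matrix.mul_assoc, conjTranspose_eq_transpose_of_trivial, transpose_pow] using h1

open LQ in
/-- Optimality-gap upper bound: with `K̃ = (Rᵘ+BᵀPB)⁻¹BᵀP(A - CL⋆)` stabilizing with `L⋆`,
`tr(Σ₀P⋆) - tr(Σ₀P) ≤ ‖Σ_{K̃,L⋆}‖ · tr(F_P(L)ᵀ W_P(L)⁻¹ F_P(L))` (spectral norm). -/
theorem optimality_gap_upper_bound {d m₁ m₂ : ℕ} (S : LQ d m₁ m₂)
    (L Ls : Matrix (Fin m₂) (Fin d) ℝ) (P Ps : Matrix (Fin d) (Fin d) ℝ)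
    (hP : P.PosDef) (hPs : Ps.PosDef)
    (hric : S.Riccati L P) (hrics : S.Riccati Ls Ps)
    (hstab : specRad (S.At L - S.B * S.KP L P) < 1)
    (hstabs : specRad (S.At Ls - S.B * S.KP Ls Ps) < 1)
    (hW : (S.WP L P).PosDef)
    (Kt : Matrix (Fin m₁) (Fin d) ℝ)
    (hKt : Kt = (S.Ru + (S.B)ᵀ * P * S.B)⁻¹ * (S.B)ᵀ * P * (S.A - S.C * Ls))
    (hKtstab : specRad (S.A - S.B * Kt - S.C * Ls) < 1)
    (Sig0 : Matrix (Fin d) (Fin d) ℝ) (hSig0 : Sig0.PosDef) :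
    (Sig0 * Ps).trace - (Sig0 * P).trace ≤
      specNorm (∑' t : ℕ, (S.A - S.B * Kt - S.C * Ls) ^ t * Sig0
          * ((S.A - S.B * Kt - S.C * Ls)ᵀ) ^ t)
        * ((S.FP L P)ᵀ * (S.WP L P)⁻¹ * S.FP L P).trace := by
  set M := S.A - S.B * Kt - S.C * Ls with hM
  set F := S.FP L P
  set W := S.WP L P
  set Sg := ∑' t : ℕ, M ^ t * Sig0 * (Mᵀ) ^ t with hSg
  have hMAt : S.At Ls - S.B * Kt = M := by rw [hM, At]; abel
  have hP1 := riccati_complete_square (S.At Ls) P S.B S.Ru hP.posSemidef S.hRu Kt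
  have hPs1 := riccati_complete_square (S.At Ls) Ps S.B S.Ru hPs.posSemidef S.hRu Kt
  -- `K̃` is the exact minimizer for `P`, so the square in `hP1` vanishes.
  have hres : Kt - (S.Ru + (S.B)ᵀ * P * S.B)⁻¹ * (S.B)ᵀ * P * S.At Ls = 0 := by
    rw [hKt, At, sub_self]
  rw [hres, Matrix.mul_zero, add_zero, hMAt] at hP1
  rw [hMAt] at hPs1
  set E := Kt - (S.Ru + (S.B)ᵀ * Ps * S.B)⁻¹ * (S.B)ᵀ * Ps * S.At Ls
  set G := (Ls - L) - W⁻¹ * F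
  have hPt : Pᵀ = P := by simpa using hP.isHermitian.eq
  have hgap : S.riccatiMap Ls P - P = Fᵀ * W⁻¹ * F - Gᵀ * W * G := by
    have hfix : S.riccatiMap L P = P := hric.symm
    have h := S.riccatiMap_sub L Ls P hPt
    rw [hfix] at h
    rw [h, riccati_gap_complete_square W hW]
  have hPs_fix : S.riccatiMap Ls Ps = Ps := hrics.symm
  have hH : (S.Ru + (S.B)ᵀ * Ps * S.B).PosSemidef := by
    have := hPs.posSemidef.conjTranspose_mul_mul_same S.B
    rw [conjTranspose_eq_transpose_of_trivial] at this
    exact S.hRu.posSemidef.add this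
  set H := S.Ru + (S.B)ᵀ * Ps * S.B
  have hY : (Gᵀ * W * G + Eᵀ * H * E).PosSemidef := by
    have h1 := hW.posSemidef.conjTranspose_mul_mul_same G
    have h2 := hH.conjTranspose_mul_mul_same E
    rw [conjTranspose_eq_transpose_of_trivial] at h1 h2
    exact h1.add h2
  have hX : (Ps - P) - Mᵀ * (Ps - P) * M
      = Fᵀ * W⁻¹ * F - (Gᵀ * W * G + Eᵀ * H * E) := by
    have e1 : Mᵀ * P * M = S.riccatiMap Ls P - (S.Q - Lsᵀ * S.Rv * Ls) - Ktᵀ * S.Ru * Kt := by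
      rw [eq_sub_iff_add_eq', hP1, riccatiMap]; abel
    have e2 : Mᵀ * Ps * M
        = Ps - (S.Q - Lsᵀ * S.Rv * Ls) + Eᵀ * H * E - Ktᵀ * S.Ru * Kt := by
      rw [eq_sub_iff_add_eq', hPs1]
      nth_rewrite 4 [← hPs_fix]
      rw [riccatiMap]; abel
    rw [Matrix.mul_sub Mᵀ Ps P, Matrix.sub_mul _ _ M, e1, e2, ← sub_sub, ← hgap]
    abel
  have hlyap : Sig0 = Sg - M * Sg * Mᵀ := eq_sub_iff_add_eq.2 (lyapunov_tsum hKtstab Sig0).symm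
  have htr : (Sig0 * (Ps - P)).trace = (Sg * ((Ps - P) - Mᵀ * (Ps - P) * M)).trace := by
    rw [hlyap, Matrix.sub_mul, Matrix.mul_sub Sg (Ps - P), trace_sub _ (_ * (Ps - P)),
      trace_sub _ (Sg * (Mᵀ * (Ps - P) * M))]
    congr 1
    rw [Matrix.mul_assoc M, Matrix.mul_assoc M, trace_mul_comm M]
    simp only [Matrix.mul_assoc]
  have hpos := trace_lyapunov_mul_nonneg hKtstab hSig0.posSemidef hY
  have hZ : (Fᵀ * W⁻¹ * F).PosSemidef := by
    have h1 := hW.inv.posSemidef.conjTranspose_mul_mul_same F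
    rwa [conjTranspose_eq_transpose_of_trivial] at h1
  have hbound := trace_mul_le_specNorm Sg _ hZ
  rw [← trace_sub, ← Matrix.mul_sub, htr, hX, Matrix.mul_sub, trace_sub]
  linarith
end
end
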